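/- arXiv:1404.4647 — 2 statements merged into one kernel-verified Lean document; each statement's English description precedes it below -/
import Mathlib

section
/- Let Ω be the standard symplectic form on ℂ^{2n}, let 0 < k ≤ n, and fix the standard isotropic subspace ℂ^k ⊂ ℂ^{2n}. The variety Γ = {V ∈ IG(k, 2n) : dim(ℂ^k ∩ V) ≥ k−1 and dim(ℂ^k + V) ≤ k+1} has complex dimension 2n − k. -/
/-!
STATEMENT 9: With Ω the standard symplectic form on ℂ^{2n}, 0 < k ≤ n, and
ℂ^k ⊂ ℂ^{2n} the standard isotropic subspace (spanned by the first k standard basis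
vectors among the z-coordinates), the variety
Γ = {V ∈ IG(k,2n) : dim(ℂ^k ∩ V) ≥ k−1 and dim(ℂ^k + V) ≤ k+1}
has complex dimension 2n − k.

As in the projection-operator model of the Grassmannian, "complex dimension d" is
expressed as Hausdorff dimension 2d = 2(2n − k).
-/

open Module

noncomputable section

variable (n : ℕ)

abbrev CSp (n : ℕ) := EuclideanSpace ℂ (Fin n ⊕ Fin n)

/-- The standard complex symplectic form `Ω = Σ dzᵢ ∧ dwᵢ` on ℂ^{2n}. -/
def stdSymplForm (x y : CSp n) : ℂ :=
  ∑ i : Fin n, (x (Sum.inl i) * y (Sum.inr i) - x (Sum.inr i) * y (Sum.inl i))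

/-- A subspace is Ω-isotropic if Ω vanishes identically on it. -/
def IsOmegaIsotropic (V : Submodule ℂ (CSp n)) : Prop :=
  ∀ x ∈ V, ∀ y ∈ V, stdSymplForm n x y = 0

/-- The standard isotropic subspace ℂ^k ⊂ ℂ^{2n}. -/
def stdCk (k : ℕ) (hkn : k ≤ n) : Submodule ℂ (CSp n) :=
  Submodule.span ℂ
    (Set.range fun i : Fin k => EuclideanSpace.single (Sum.inl (Fin.castLE hkn i)) (1 : ℂ))

/-- The projection-operator model of the curve neighborhood
`Γ = {V ∈ IG(k,2n) : dim(ℂ^k ∩ V) ≥ k−1, dim(ℂ^k + V) ≤ k+1}`. -/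
def GammaIG (k : ℕ) (hkn : k ≤ n) : Set (CSp n →L[ℂ] CSp n) :=
  {P | P.comp P = P ∧ ContinuousLinearMap.adjoint P = P ∧
    finrank ℂ (LinearMap.range (P : CSp n →ₗ[ℂ] CSp n)) = k ∧
    IsOmegaIsotropic n (LinearMap.range (P : CSp n →ₗ[ℂ] CSp n)) ∧
    k - 1 ≤ finrank ℂ ↥(stdCk n k hkn ⊓ LinearMap.range (P : CSp n →ₗ[ℂ] CSp n)) ∧
    finrank ℂ ↥(stdCk n k hkn ⊔ LinearMap.range (P : CSp n →ₗ[ℂ] CSp n)) ≤ k + 1}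

/-!
If `A : K → E` has the left inverse `C`, the orthogonal projection `P_A` onto its range satisfies
`P_A = A C P_A`. Hence, among the `A` with `C A = 1`, the map `A ↦ P_A` is Lipschitz and is
bi-Lipschitz on bounded sets, so the Hausdorff dimension of a set of projections can be computed on
frames normalized by a fixed `C`.

Away from the point `ℂ^k`, an element of `Γ` is spanned by a hyperplane `W` of `ℂ^k` and a vector
of `W^Ω` outside `ℂ^k`. Bringing both into reduced echelon form covers `Γ \ {ℂ^k}` by finitely
many charts whose frames are injective smooth functions, with smooth left inverse, of
`k - 1` complex slopes for `W` and `2n - 2k + 1` complex coordinates for the transversal vector.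
-/

section HausdorffDimension

open scoped NNReal

theorem dimH_le_dimH_image_of_dist_le {X Y : Type*} [MetricSpace X] [MetricSpace Y]
    {f : X → Y} {s : Set X} {C : ℝ≥0}
    (h : ∀ x ∈ s, ∀ y ∈ s, dist x y ≤ C * dist (f x) (f y)) : dimH s ≤ dimH (f '' s) := by
  have hanti : AntilipschitzWith C (s.domRestrict f) :=
    .of_le_mul_dist fun x y => h x x.2 y y.2
  calc dimH s = dimH (Set.univ : Set s) := by
        have := (isometry_subtype_coe (s := s)).dimH_image Set.univ
        rwa [Set.image_univ, Subtype.range_coe] at this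
    _ ≤ dimH (s.domRestrict f '' Set.univ) := hanti.le_dimH_image _
    _ = dimH (f '' s) := by rw [Set.image_univ, Set.range_domRestrict]

theorem dimH_range_eq_finrank_of_leftInverse {X Y : Type*}
    [NormedAddCommGroup X] [NormedSpace ℝ X] [FiniteDimensional ℝ X]
    [NormedAddCommGroup Y] [NormedSpace ℝ Y] [FiniteDimensional ℝ Y] {f : X → Y} {g : Y → X}
    (hf : ContDiff ℝ 1 f) (hg : ContDiff ℝ 1 g) (hgf : Function.LeftInverse g f) :
    dimH (Set.range f) = finrank ℝ X := by
  refine le_antisymm hf.dimH_range_le ?_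
  calc (finrank ℝ X : ENNReal) = dimH (g '' Set.range f) := by
        rw [← Set.range_comp, hgf.comp_eq_id, Set.range_id, Real.dimH_univ_eq_finrank]
    _ ≤ dimH (Set.range f) := hg.contDiffOn.dimH_image_le convex_univ (Set.subset_univ _)

end HausdorffDimension

section StarProjection

open ContinuousLinearMap

variable {𝕜 E : Type*} [RCLike 𝕜] [NormedAddCommGroup E] [InnerProductSpace 𝕜 E]

theorem norm_starProjection_sub_le [CompleteSpace E] (U V : Submodule 𝕜 E)
    [U.HasOrthogonalProjection] [V.HasOrthogonalProjection] :
    ‖U.starProjection - V.starProjection‖ ≤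
      ‖Vᗮ.starProjection ∘L U.starProjection‖ + ‖Uᗮ.starProjection ∘L V.starProjection‖ := by
  have hadj : adjoint (Uᗮ.starProjection ∘L V.starProjection) =
      V.starProjection ∘L Uᗮ.starProjection := by
    simp only [adjoint_comp, (isSelfAdjoint_starProjection _).adjoint_eq]
  calc ‖U.starProjection - V.starProjection‖
      = ‖Vᗮ.starProjection ∘L U.starProjection - V.starProjection ∘L Uᗮ.starProjection‖ := by
        congr 1
        ext x
        simp [Submodule.starProjection_orthogonal]
    _ ≤ _ := by
        rw [← hadj, ← LinearIsometryEquiv.norm_map adjoint (Uᗮ.starProjection ∘L V.starProjection)]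
        exact norm_sub_le _ _

variable {K : Type*} [NormedAddCommGroup K] [NormedSpace 𝕜 K] [FiniteDimensional 𝕜 K]
  {A B : K →L[𝕜] E} {C : E →L[𝕜] K}

theorem comp_comp_starProjection_range (hA : C ∘L A = .id 𝕜 K) :
    A ∘L C ∘L A.range.starProjection = A.range.starProjection := by
  ext x
  obtain ⟨y, hy⟩ := A.range.starProjection_apply_mem x
  rw [coe_coe] at hy
  simp only [comp_apply, ← hy]
  rw [← comp_apply C A, hA, id_apply]

theorem starProjection_range_comp (A : K →L[𝕜] E) : A.range.starProjection ∘L A = A := by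
  ext x
  exact Submodule.starProjection_eq_self_iff.2 ⟨x, rfl⟩

theorem norm_orthogonal_comp_starProjection_range_le (B : K →L[𝕜] E) (hA : C ∘L A = .id 𝕜 K) :
    ‖B.rangeᗮ.starProjection ∘L A.range.starProjection‖ ≤ ‖C‖ * ‖A - B‖ := by
  set P := A.range.starProjection
  set Q := B.rangeᗮ.starProjection
  have hQB : Q ∘L B = 0 := by
    rw [show Q = _ from Submodule.starProjection_orthogonal _, sub_comp, starProjection_range_comp,
      id_comp, sub_self]
  calc ‖Q ∘L P‖ = ‖Q ∘L (A - B) ∘L C ∘L P‖ := by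
        rw [sub_comp, comp_sub, comp_comp_starProjection_range hA, ← comp_assoc Q B, hQB,
          zero_comp, sub_zero]
    _ ≤ 1 * (‖A - B‖ * (‖C‖ * 1)) := by
        refine (opNorm_comp_le _ _).trans ?_
        gcongr
        · exact Submodule.starProjection_norm_le _
        · refine (opNorm_comp_le _ _).trans ?_
          gcongr
          refine (opNorm_comp_le _ _).trans ?_
          gcongr
          exact Submodule.starProjection_norm_le _
    _ = ‖C‖ * ‖A - B‖ := by ring

theorem norm_sub_le_norm_starProjection_range_sub (hA : C ∘L A = .id 𝕜 K)
    (hB : C ∘L B = .id 𝕜 K) :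
    ‖A - B‖ ≤
      (1 + ‖B‖ * ‖C‖) * ‖A‖ * ‖A.range.starProjection - B.range.starProjection‖ := by
  set D := A.range.starProjection - B.range.starProjection with hD
  have hDA : D ∘L A = A - B ∘L C ∘L B.range.starProjection ∘L A := by
    rw [hD, sub_comp, starProjection_range_comp, ← comp_assoc C, ← comp_assoc B,
      comp_comp_starProjection_range hB]
  have hCDA : C ∘L B.range.starProjection ∘L A = .id 𝕜 K - C ∘L D ∘L A := by
    rw [hD, sub_comp, starProjection_range_comp, comp_sub, hA, sub_sub_cancel]
  have hsub : A - B = D ∘L A - B ∘L C ∘L D ∘L A := by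
    conv_rhs => enter [1]; rw [hDA, hCDA]
    rw [comp_sub, comp_id]
    abel
  calc ‖A - B‖ ≤ ‖D‖ * ‖A‖ + ‖B‖ * (‖C‖ * (‖D‖ * ‖A‖)) := by
        rw [hsub]
        refine (norm_sub_le _ _).trans (add_le_add (opNorm_comp_le _ _) ?_)
        refine (opNorm_comp_le _ _).trans ?_
        gcongr
        refine (opNorm_comp_le _ _).trans ?_
        gcongr
        exact opNorm_comp_le _ _
    _ = (1 + ‖B‖ * ‖C‖) * ‖A‖ * ‖D‖ := by ring

variable [CompleteSpace E]

theorem norm_starProjection_range_sub_le (hA : C ∘L A = .id 𝕜 K) (hB : C ∘L B = .id 𝕜 K) :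
    ‖A.range.starProjection - B.range.starProjection‖ ≤ 2 * ‖C‖ * ‖A - B‖ := by
  have h₁ := norm_orthogonal_comp_starProjection_range_le B hA
  have h₂ := norm_orthogonal_comp_starProjection_range_le A hB
  rw [norm_sub_rev] at h₂
  linarith [norm_starProjection_sub_le A.range B.range]

theorem dimH_image_starProjection_range {S : Set (K →L[𝕜] E)}
    (hS : ∀ A ∈ S, C ∘L A = .id 𝕜 K) :
    dimH ((fun A : K →L[𝕜] E => A.range.starProjection) '' S) = dimH S := by
  apply le_antisymm
  · refine (LipschitzOnWith.of_dist_le_mul (K := 2 * ‖C‖₊) fun A hA B hB => ?_).dimH_image_le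
    simpa [dist_eq_norm] using norm_starProjection_range_sub_le (hS A hA) (hS B hB)
  · have hcover : S = ⋃ N : ℕ, S ∩ Metric.closedBall 0 N := by
      rw [← Set.inter_iUnion, Metric.iUnion_closedBall_nat, Set.inter_univ]
    conv_lhs => rw [hcover, dimH_iUnion]
    refine iSup_le fun N => ?_
    refine le_trans ?_
      (dimH_mono (Set.image_mono (Set.inter_subset_left (t := Metric.closedBall 0 (N : ℝ)))))
    refine dimH_le_dimH_image_of_dist_le (C := (1 + N * ‖C‖₊) * N) fun A hA B hB => ?_
    have hAN : ‖A‖ ≤ N := mem_closedBall_zero_iff.1 hA.2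
    have hBN : ‖B‖ ≤ N := mem_closedBall_zero_iff.1 hB.2
    push_cast
    rw [dist_eq_norm, dist_eq_norm]
    refine (norm_sub_le_norm_starProjection_range_sub (hS A hA.1) (hS B hB.1)).trans ?_
    gcongr

end StarProjection

theorem contDiff_extend {𝕜 ι κ F : Type*} [NontriviallyNormedField 𝕜] [Fintype ι] [Fintype κ]
    [NormedAddCommGroup F] [NormedSpace 𝕜 F] {N : WithTop ℕ∞} {s : ι → κ} (hs : s.Injective)
    (d : κ → F) :
    ContDiff 𝕜 N fun y : ι → F => Function.extend s y d := by
  refine contDiff_pi.2 fun a => ?_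
  by_cases ha : ∃ b, s b = a
  · obtain ⟨b, rfl⟩ := ha
    simpa only [hs.extend_apply] using contDiff_apply 𝕜 F b
  · simpa only [Function.extend_apply' _ _ _ ha] using contDiff_const

section Frames

variable {𝕜 E ι : Type*} [Field 𝕜] [AddCommGroup E] [Module 𝕜 E] [Finite ι]

theorem linearIndependent_of_apply_eq_single [DecidableEq ι] {C : E →ₗ[𝕜] ι → 𝕜} {f : ι → E}
    (hf : ∀ j, C (f j) = Pi.single j 1) : LinearIndependent 𝕜 f := by
  refine .of_comp C ?_
  rw [show C ∘ f = Pi.basisFun 𝕜 ι by ext1 j; simp [hf]]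
  exact (Pi.basisFun 𝕜 ι).linearIndependent

theorem exists_add_smul_mem_of_finrank_le [Nonempty ι] (b : ι → E) (W : Submodule 𝕜 E)
    (h : finrank 𝕜 (Submodule.span 𝕜 (Set.range b)) ≤
      finrank 𝕜 ↥(Submodule.span 𝕜 (Set.range b) ⊓ W) + 1) :
    ∃ (i : ι) (c : ι → 𝕜), ∀ j, b j + c j • b i ∈ W := by
  by_cases hall : ∀ j, b j ∈ W
  · exact ⟨Classical.arbitrary ι, 0, by simpa using hall⟩
  push Not at hall
  obtain ⟨i, hi⟩ := hall
  set U := Submodule.span 𝕜 (Set.range b)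
  have : FiniteDimensional 𝕜 U := .span_of_finite 𝕜 (Set.finite_range b)
  have hbU : ∀ j, b j ∈ U := fun j => Submodule.subset_span ⟨j, rfl⟩
  have hlt : U ⊓ W < U ⊓ W ⊔ 𝕜 ∙ b i :=
    left_lt_sup.2 fun hle => hi (hle (Submodule.mem_span_singleton_self _)).2
  have hle : U ⊓ W ⊔ 𝕜 ∙ b i ≤ U :=
    sup_le inf_le_left ((Submodule.span_singleton_le_iff_mem _ _).2 (hbU i))
  have : FiniteDimensional 𝕜 ↥(U ⊓ W ⊔ 𝕜 ∙ b i) := Submodule.finiteDimensional_of_le hle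
  have hU : U ⊓ W ⊔ 𝕜 ∙ b i = U := by
    have := Submodule.finrank_lt_finrank_of_lt hlt
    exact Submodule.eq_of_le_of_finrank_le hle (by omega)
  have hshift : ∀ j, ∃ c : 𝕜, b j + c • b i ∈ W := by
    intro j
    obtain ⟨w, hw, z, hz, hwz⟩ := Submodule.mem_sup.1 (hU.ge (hbU j))
    obtain ⟨c, rfl⟩ := Submodule.mem_span_singleton.1 hz
    exact ⟨-c, by simpa [← hwz] using hw.2⟩
  choose c hc using hshift
  exact ⟨i, c, hc⟩

end Frames

open ContinuousLinearMap in
theorem dimH_image_starProjection_span {𝕜 E ι : Type*} [RCLike 𝕜] [NormedAddCommGroup E]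
    [InnerProductSpace 𝕜 E] [FiniteDimensional 𝕜 E] [Fintype ι] [DecidableEq ι]
    {C : E →ₗ[𝕜] ι → 𝕜} {S : Set (ι → E)} (hS : ∀ f ∈ S, ∀ j, C (f j) = Pi.single j 1) :
    dimH ((fun f : ι → E => (Submodule.span 𝕜 (Set.range f)).starProjection) '' S) = dimH S := by
  have := FiniteDimensional.complete 𝕜 E
  set e : (ι → E) ≃L[𝕜] ((ι → 𝕜) →L[𝕜] E) :=
    ((Pi.basisFun 𝕜 ι).constr 𝕜 ≪≫ₗ LinearMap.toContinuousLinearMap).toContinuousLinearEquiv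
  have he : ∀ f : ι → E, (e f).range = Submodule.span 𝕜 (Set.range f) :=
    fun f => (Pi.basisFun 𝕜 ι).constr_range 𝕜
  have heC : ∀ A ∈ e '' S, C.toContinuousLinearMap ∘L A = .id 𝕜 (ι → 𝕜) := by
    rintro _ ⟨f, hf, rfl⟩
    refine coe_injective ((Pi.basisFun 𝕜 ι).ext fun j => ?_)
    have hej : e f (Pi.basisFun 𝕜 ι j) = f j := (Pi.basisFun 𝕜 ι).constr_basis 𝕜 f j
    change C (e f (Pi.basisFun 𝕜 ι j)) = Pi.basisFun 𝕜 ι j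
    rw [hej, hS f hf, Pi.basisFun_apply]
  rw [← e.dimH_image S, ← dimH_image_starProjection_range heC, Set.image_image]
  simp only [he]

section SymplecticForm

/-- The standard symplectic form `Ω` bundled as a bilinear form. -/
def stdSymplBilin (n : ℕ) : LinearMap.BilinForm ℂ (CSp n) :=
  LinearMap.mk₂ ℂ (stdSymplForm n)
    (fun x x' y => by
      simp only [stdSymplForm, PiLp.add_apply, ← Finset.sum_add_distrib]
      exact Finset.sum_congr rfl fun _ _ => by ring)
    (fun r x y => by
      simp only [stdSymplForm, PiLp.smul_apply, smul_eq_mul, Finset.mul_sum]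
      exact Finset.sum_congr rfl fun _ _ => by ring)
    (fun x y y' => by
      simp only [stdSymplForm, PiLp.add_apply, ← Finset.sum_add_distrib]
      exact Finset.sum_congr rfl fun _ _ => by ring)
    (fun r x y => by
      simp only [stdSymplForm, PiLp.smul_apply, smul_eq_mul, Finset.mul_sum]
      exact Finset.sum_congr rfl fun _ _ => by ring)

variable {n}

theorem stdSymplBilin_isAlt : (stdSymplBilin n).IsAlt := fun x => by
  simp [stdSymplBilin, stdSymplForm, mul_comm]

theorem stdSymplBilin_single_inl (a : Fin n) (x : CSp n) :
    stdSymplBilin n (EuclideanSpace.single (Sum.inl a) 1) x = x (Sum.inr a) := by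
  simp [stdSymplBilin, stdSymplForm]

theorem isOmegaIsotropic_span {s : Set (CSp n)}
    (h : ∀ x ∈ s, ∀ y ∈ s, stdSymplBilin n x y = 0) :
    IsOmegaIsotropic n (Submodule.span ℂ s) := by
  have hleft : ∀ y ∈ s, Submodule.span ℂ s ≤ LinearMap.ker ((stdSymplBilin n).flip y) :=
    fun y hy => Submodule.span_le.2 fun x hx => h x hx y hy
  intro x hx
  exact Submodule.span_le (p := LinearMap.ker (stdSymplBilin n x)).2 fun y hy => hleft y hy hx

end SymplecticForm

section CurveNeighborhood

variable {n} {k : ℕ} (hkn : k ≤ n)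

/-- The `j`-th vector of the standard basis of `ℂ^k`. -/
abbrev posVec (j : Fin k) : CSp n := EuclideanSpace.single (Sum.inl (Fin.castLE hkn j)) 1

/-- The vector of the standard basis of `ℂ^{2n}` dual under `Ω` to `posVec hkn j`. -/
abbrev momVec (j : Fin k) : CSp n := EuclideanSpace.single (Sum.inr (Fin.castLE hkn j)) 1

theorem posVec_mem_stdCk (j : Fin k) : posVec hkn j ∈ stdCk n k hkn :=
  Submodule.subset_span ⟨j, rfl⟩

theorem linearIndependent_posVec : LinearIndependent ℂ (posVec hkn) := by
  refine linearIndependent_of_apply_eq_single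
    (C := LinearMap.pi fun j => (EuclideanSpace.projₗ (Sum.inl (Fin.castLE hkn j)))) fun j => ?_
  ext l
  simp [Pi.single_apply]

theorem finrank_stdCk : finrank ℂ (stdCk n k hkn) = k :=
  (finrank_span_eq_card (linearIndependent_posVec hkn)).trans (Fintype.card_fin k)

theorem mem_stdCk_iff {x : CSp n} :
    x ∈ stdCk n k hkn ↔ ∀ c, (∀ j, c ≠ Sum.inl (Fin.castLE hkn j)) → x c = 0 := by
  constructor
  · intro hx c hc
    have hle : stdCk n k hkn ≤ LinearMap.ker (EuclideanSpace.projₗ (𝕜 := ℂ) c) := by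
      refine Submodule.span_le.2 ?_
      rintro _ ⟨j, rfl⟩
      simp [hc j]
    exact hle hx
  · intro hx
    have hsum : x = ∑ c, x c • EuclideanSpace.single c (1 : ℂ) := by
      simpa using ((EuclideanSpace.basisFun _ ℂ).sum_repr x).symm
    rw [hsum]
    refine Submodule.sum_mem _ fun c _ => ?_
    by_cases hc : ∃ j, c = Sum.inl (Fin.castLE hkn j)
    · obtain ⟨j, rfl⟩ := hc
      exact Submodule.smul_mem _ _ (posVec_mem_stdCk hkn j)
    · rw [hx c (not_exists.1 hc), zero_smul]
      exact Submodule.zero_mem _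

theorem isOmegaIsotropic_stdCk : IsOmegaIsotropic n (stdCk n k hkn) := by
  refine isOmegaIsotropic_span ?_
  rintro _ ⟨j, rfl⟩ _ ⟨l, rfl⟩
  simp [stdSymplBilin_single_inl]

/-- The curve neighborhood `Γ` as a set of subspaces. The condition `dim(ℂ^k + V) ≤ k + 1` is
omitted since it is equivalent to `dim(ℂ^k ∩ V) ≥ k - 1` when `dim V = k`. -/
def gammaSubspaces : Set (Submodule ℂ (CSp n)) :=
  {V | finrank ℂ V = k ∧ IsOmegaIsotropic n V ∧ k - 1 ≤ finrank ℂ ↥(stdCk n k hkn ⊓ V)}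

theorem GammaIG_eq_image_gammaSubspaces :
    GammaIG n k hkn =
      (fun V : Submodule ℂ (CSp n) => V.starProjection) '' gammaSubspaces hkn := by
  ext P
  constructor
  · rintro ⟨hidem, hadj, hrank, hiso, hinf, -⟩
    obtain ⟨_, hP⟩ := isStarProjection_iff_eq_starProjection_range.1 ⟨hidem, hadj⟩
    exact ⟨_, ⟨hrank, hiso, hinf⟩, hP.symm⟩
  · rintro ⟨V, ⟨hrank, hiso, hinf⟩, rfl⟩
    have hsup := Submodule.finrank_sup_add_finrank_inf_eq (stdCk n k hkn) V
    rw [finrank_stdCk, hrank] at hsup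
    have hrange : LinearMap.range (V.starProjection : CSp n →ₗ[ℂ] CSp n) = V :=
      V.range_starProjection
    refine ⟨V.isIdempotentElem_starProjection,
      (isSelfAdjoint_starProjection V).adjoint_eq, ?_⟩
    dsimp only
    rw [hrange]
    exact ⟨hrank, hiso, hinf, by omega⟩

end CurveNeighborhood

section AdaptedFrames

variable {n} {k : ℕ} (hkn : k ≤ n) (i : Fin k)

/-- The coordinates of `ℂ^{2n}` other than those of `posVec hkn j` and `momVec hkn j` for
`j ≠ i`. They are coordinates on `W^Ω / W` for each hyperplane `W` of `ℂ^k` spanned by vectors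
`posVec hkn j + c j • posVec hkn i`, `j ≠ i`. -/
def fiberCoords : Finset (Fin n ⊕ Fin n) :=
  let rest : Finset (Fin n) := ((Finset.univ.erase i).map (Fin.castLEEmb hkn))ᶜ
  rest.disjSum rest

/-- The fiber coordinates that vanish on `ℂ^k`. -/
def pivotCoords : Finset (Fin n ⊕ Fin n) :=
  (fiberCoords hkn i).erase (Sum.inl (Fin.castLE hkn i))

variable {hkn i} in
theorem inl_mem_fiberCoords {a : Fin n} :
    Sum.inl a ∈ fiberCoords hkn i ↔ ∀ j ≠ i, Fin.castLE hkn j ≠ a := by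
  simp only [fiberCoords, Finset.inl_mem_disjSum, Finset.mem_compl, Finset.mem_map,
    Finset.mem_erase, Finset.mem_univ, and_true, Fin.coe_castLEEmb, not_exists, not_and]

variable {hkn i} in
theorem inr_mem_fiberCoords {a : Fin n} :
    Sum.inr a ∈ fiberCoords hkn i ↔ ∀ j ≠ i, Fin.castLE hkn j ≠ a := by
  simp only [fiberCoords, Finset.inr_mem_disjSum, Finset.mem_compl, Finset.mem_map,
    Finset.mem_erase, Finset.mem_univ, and_true, Fin.coe_castLEEmb, not_exists, not_and]

theorem card_fiberCoords : (fiberCoords hkn i).card = 2 * (n - (k - 1)) := by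
  simp only [fiberCoords, Finset.card_disjSum, Finset.card_compl, Finset.card_map,
    Finset.card_erase_of_mem (Finset.mem_univ i), Finset.card_univ, Fintype.card_fin]
  omega

variable {hkn i} in
theorem ne_inl_of_mem_pivotCoords {m : Fin n ⊕ Fin n} (hm : m ∈ pivotCoords hkn i) (j : Fin k) :
    m ≠ Sum.inl (Fin.castLE hkn j) := by
  rintro rfl
  obtain ⟨hne, hmem⟩ := Finset.mem_erase.1 hm
  by_cases hj : j = i
  · exact hne (by rw [hj])
  · exact inl_mem_fiberCoords.1 hmem j hj rfl

theorem inr_mem_pivotCoords : Sum.inr (Fin.castLE hkn i) ∈ pivotCoords hkn i := by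
  simp [pivotCoords, inr_mem_fiberCoords]

/-- The vector that agrees with `z` in the fiber coordinates and is `Ω`-orthogonal to
`posVec hkn j + c j • posVec hkn i` for all `j ≠ i`. -/
def transversalVec (c : Fin k → ℂ) (z : CSp n) : CSp n :=
  z - z (Sum.inr (Fin.castLE hkn i)) • ∑ j ∈ Finset.univ.erase i, c j • momVec hkn j

/-- The frame consisting of a basis of the hyperplane of `ℂ^k` with slopes `c` and, at index `i`,
the transversal vector determined by `z`. -/
def adaptedFrame (c : Fin k → ℂ) (z : CSp n) : Fin k → CSp n :=
  Function.update (fun j => posVec hkn j + c j • posVec hkn i) i (transversalVec hkn i c z)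

/-- The vectors `z` supported in the fiber coordinates and with coordinate `1` at the pivot `m`. -/
structure IsNormalized (m : Fin n ⊕ Fin n) (z : CSp n) : Prop where
  eq_zero : ∀ a ∉ fiberCoords hkn i, z a = 0
  pivot : z m = 1

variable {hkn i}

theorem transversalVec_apply_of_mem (c : Fin k → ℂ) (z : CSp n) {a : Fin n ⊕ Fin n}
    (ha : a ∈ fiberCoords hkn i) : transversalVec hkn i c z a = z a := by
  have hmom : ∀ j ∈ Finset.univ.erase i, c j • (momVec hkn j) a = 0 := by
    intro j hj
    rcases a with a | a
    · simp
    · simp [(inr_mem_fiberCoords.1 ha j (Finset.ne_of_mem_erase hj)).symm]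
  simp only [transversalVec, PiLp.sub_apply, PiLp.smul_apply, WithLp.ofLp_sum, Finset.sum_apply,
    Finset.sum_eq_zero hmom, smul_zero, sub_zero]

theorem transversalVec_apply_inl (c : Fin k → ℂ) (z : CSp n) (a : Fin n) :
    transversalVec hkn i c z (Sum.inl a) = z (Sum.inl a) := by
  simp [transversalVec]

theorem transversalVec_apply_inr (c : Fin k → ℂ) (z : CSp n) {j : Fin k} (hj : j ≠ i) :
    transversalVec hkn i c z (Sum.inr (Fin.castLE hkn j)) =
      z (Sum.inr (Fin.castLE hkn j)) - z (Sum.inr (Fin.castLE hkn i)) * c j := by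
  simp [transversalVec, Pi.single_apply, hj]

variable (hkn i) in
/-- The coordinates with index `m` (in position `i`) and `posVec hkn j` (in position `j ≠ i`). -/
def frameCoord (m : Fin n ⊕ Fin n) : CSp n →ₗ[ℂ] Fin k → ℂ :=
  LinearMap.pi fun j =>
    EuclideanSpace.projₗ (if j = i then m else Sum.inl (Fin.castLE hkn j))

theorem adaptedFrame_self (c : Fin k → ℂ) (z : CSp n) :
    adaptedFrame hkn i c z i = transversalVec hkn i c z :=
  Function.update_self ..

theorem adaptedFrame_of_ne (c : Fin k → ℂ) (z : CSp n) {j : Fin k} (hj : j ≠ i) :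
    adaptedFrame hkn i c z j = posVec hkn j + c j • posVec hkn i :=
  Function.update_of_ne hj ..

theorem frameCoord_adaptedFrame {m : Fin n ⊕ Fin n} (hm : m ∈ pivotCoords hkn i)
    (c : Fin k → ℂ) {z : CSp n} (hz : IsNormalized hkn i m z) (j : Fin k) :
    frameCoord hkn i m (adaptedFrame hkn i c z j) = Pi.single j 1 := by
  have hne := ne_inl_of_mem_pivotCoords hm
  ext l
  by_cases hj : j = i
  · subst hj
    rw [adaptedFrame_self]
    by_cases hl : l = j
    · subst hl
      simp [frameCoord, transversalVec_apply_of_mem c z (Finset.mem_of_mem_erase hm), hz.pivot]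
    · have hzl : z (Sum.inl (Fin.castLE hkn l)) = 0 :=
        hz.eq_zero _ fun h => inl_mem_fiberCoords.1 h l hl rfl
      simp [frameCoord, hl, transversalVec_apply_inl, hzl]
  · rw [adaptedFrame_of_ne c z hj]
    by_cases hl : l = i
    · subst hl
      simp [frameCoord, hne, Ne.symm hj]
    · simp [frameCoord, hl, Pi.single_apply]

theorem stdSymplBilin_posVec_add_smul (c : ℂ) (j : Fin k) (x : CSp n) :
    stdSymplBilin n (posVec hkn j + c • posVec hkn i) x =
      x (Sum.inr (Fin.castLE hkn j)) + c * x (Sum.inr (Fin.castLE hkn i)) := by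
  simp [stdSymplBilin_single_inl]

theorem stdSymplBilin_adaptedFrame (c : Fin k → ℂ) {z : CSp n}
    (hz : ∀ a ∉ fiberCoords hkn i, z a = 0) (j l : Fin k) :
    stdSymplBilin n (adaptedFrame hkn i c z j) (adaptedFrame hkn i c z l) = 0 := by
  have hbase : ∀ j ≠ i, ∀ l,
      stdSymplBilin n (adaptedFrame hkn i c z j) (adaptedFrame hkn i c z l) = 0 := by
    intro j hj l
    rw [adaptedFrame_of_ne c z hj, stdSymplBilin_posVec_add_smul]
    by_cases hl : l = i
    · subst hl
      have hzj : z (Sum.inr (Fin.castLE hkn j)) = 0 :=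
        hz _ fun h => inr_mem_fiberCoords.1 h j hj rfl
      rw [adaptedFrame_self, transversalVec_apply_inr c z hj, hzj, transversalVec_apply_of_mem c z
        (inr_mem_fiberCoords.2 fun j hj h => hj (Fin.castLE_injective hkn h))]
      ring
    · simp [adaptedFrame_of_ne c z hl]
  by_cases hj : j = i
  · by_cases hl : l = i
    · rw [hj, hl, stdSymplBilin_isAlt]
    · rw [← stdSymplBilin_isAlt.neg_eq, hbase l hl, neg_zero]
  · exact hbase j hj l

theorem span_adaptedFrame_mem_gammaSubspaces {m : Fin n ⊕ Fin n} (hm : m ∈ pivotCoords hkn i)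
    (c : Fin k → ℂ) {z : CSp n} (hz : IsNormalized hkn i m z) :
    Submodule.span ℂ (Set.range (adaptedFrame hkn i c z)) ∈ gammaSubspaces hkn := by
  have hli := linearIndependent_of_apply_eq_single (frameCoord_adaptedFrame hm c hz)
  refine ⟨(finrank_span_eq_card hli).trans (Fintype.card_fin k), isOmegaIsotropic_span ?_, ?_⟩
  · rintro _ ⟨j, rfl⟩ _ ⟨l, rfl⟩
    exact stdSymplBilin_adaptedFrame c hz.eq_zero j l
  · let u : {j : Fin k // j ≠ i} → CSp n := fun j => adaptedFrame hkn i c z j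
    have hu : LinearIndependent ℂ u := hli.comp _ Subtype.val_injective
    have hle : Submodule.span ℂ (Set.range u) ≤
        stdCk n k hkn ⊓ Submodule.span ℂ (Set.range (adaptedFrame hkn i c z)) := by
      refine Submodule.span_le.2 ?_
      rintro _ ⟨j, rfl⟩
      refine ⟨?_, Submodule.subset_span ⟨j, rfl⟩⟩
      simp only [u, adaptedFrame_of_ne c z j.2]
      exact add_mem (posVec_mem_stdCk hkn j) (Submodule.smul_mem _ _ (posVec_mem_stdCk hkn i))
    calc k - 1 = finrank ℂ (Submodule.span ℂ (Set.range u)) := by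
          rw [finrank_span_eq_card hu]
          simp
      _ ≤ _ := Submodule.finrank_mono hle

theorem exists_transversalVec_eq (c : Fin k → ℂ) {w : CSp n}
    (hinl : ∀ j ≠ i, w (Sum.inl (Fin.castLE hkn j)) = 0)
    (hinr : ∀ j ≠ i, stdSymplBilin n (posVec hkn j + c j • posVec hkn i) w = 0) :
    ∃ z : CSp n, (∀ a ∉ fiberCoords hkn i, z a = 0) ∧ transversalVec hkn i c z = w := by
  let z : CSp n := WithLp.toLp 2 fun a => if a ∈ fiberCoords hkn i then w a else 0
  have hmem : ∀ a ∈ fiberCoords hkn i, z a = w a := fun a ha => if_pos ha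
  have hnot : ∀ a ∉ fiberCoords hkn i, z a = 0 := fun a ha => if_neg ha
  refine ⟨z, hnot, ?_⟩
  ext a
  by_cases ha : a ∈ fiberCoords hkn i
  · rw [transversalVec_apply_of_mem c z ha, hmem a ha]
  rcases a with a | a
  · obtain ⟨j, hj, rfl⟩ : ∃ j ≠ i, Fin.castLE hkn j = a := by
      simpa [inl_mem_fiberCoords] using ha
    rw [transversalVec_apply_inl, hnot _ ha, hinl j hj]
  · obtain ⟨j, hj, rfl⟩ : ∃ j ≠ i, Fin.castLE hkn j = a := by
      simpa [inr_mem_fiberCoords] using ha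
    have hwj := hinr j hj
    rw [stdSymplBilin_posVec_add_smul] at hwj
    have hi : z (Sum.inr (Fin.castLE hkn i)) = w (Sum.inr (Fin.castLE hkn i)) :=
      hmem _ (Finset.mem_of_mem_erase (inr_mem_pivotCoords hkn i))
    rw [transversalVec_apply_inr c z hj, hnot _ ha, hi]
    linear_combination -hwj

theorem transversalVec_smul (c : Fin k → ℂ) (r : ℂ) (z : CSp n) :
    transversalVec hkn i c (r • z) = r • transversalVec hkn i c z := by
  simp only [transversalVec, PiLp.smul_apply, smul_sub, smul_assoc]

theorem exists_mem_pivotCoords_apply_ne_zero {c : Fin k → ℂ} {z : CSp n}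
    (hz : ∀ a ∉ fiberCoords hkn i, z a = 0) (hzk : transversalVec hkn i c z ∉ stdCk n k hkn) :
    ∃ m ∈ pivotCoords hkn i, z m ≠ 0 := by
  by_contra! hpivot
  refine hzk ?_
  rw [transversalVec, hpivot _ (inr_mem_pivotCoords hkn i), zero_smul, sub_zero, mem_stdCk_iff]
  intro a ha
  by_cases hmem : a ∈ fiberCoords hkn i
  · exact hpivot a (Finset.mem_erase.2 ⟨ha i, hmem⟩)
  · exact hz a hmem

theorem exists_isNormalized_transversalVec_mem {V : Submodule ℂ (CSp n)}
    (hV : IsOmegaIsotropic n V) (hVk : ¬ V ≤ stdCk n k hkn) {c : Fin k → ℂ}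
    (hc : ∀ j ≠ i, posVec hkn j + c j • posVec hkn i ∈ V) :
    ∃ m ∈ pivotCoords hkn i, ∃ z, IsNormalized hkn i m z ∧ transversalVec hkn i c z ∈ V := by
  obtain ⟨v₀, hv₀V, hv₀⟩ := SetLike.not_le_iff_exists.1 hVk
  -- Subtracting `s ∈ ℂ^k ∩ V` clears the coordinates of `v₀` along `posVec hkn j`, `j ≠ i`.
  set s := ∑ j ∈ Finset.univ.erase i,
    v₀ (Sum.inl (Fin.castLE hkn j)) • (posVec hkn j + c j • posVec hkn i) with hs
  have hsV : s ∈ V := Submodule.sum_mem _ fun j hj =>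
    Submodule.smul_mem _ _ (hc j (Finset.ne_of_mem_erase hj))
  have hsk : s ∈ stdCk n k hkn := Submodule.sum_mem _ fun j _ => Submodule.smul_mem _ _
    (add_mem (posVec_mem_stdCk hkn j) (Submodule.smul_mem _ _ (posVec_mem_stdCk hkn i)))
  have hvV : v₀ - s ∈ V := sub_mem hv₀V hsV
  have hinl : ∀ j ≠ i, (v₀ - s) (Sum.inl (Fin.castLE hkn j)) = 0 := by
    intro j hj
    simp [hs, hj, Pi.single_apply]
  obtain ⟨z, hz, hzv⟩ := exists_transversalVec_eq c hinl fun j hj => hV _ (hc j hj) _ hvV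
  have hzk : transversalVec hkn i c z ∉ stdCk n k hkn := by
    rwa [hzv, Submodule.sub_mem_iff_left _ hsk]
  obtain ⟨m, hm, hzm⟩ := exists_mem_pivotCoords_apply_ne_zero hz hzk
  refine ⟨m, hm, (z m)⁻¹ • z, ⟨fun a ha => ?_, ?_⟩, ?_⟩
  · rw [PiLp.smul_apply, hz a ha, smul_zero]
  · exact inv_mul_cancel₀ hzm
  · rw [transversalVec_smul, hzv]
    exact V.smul_mem _ hvV

theorem exists_span_adaptedFrame_eq (hk : 0 < k) {V : Submodule ℂ (CSp n)}
    (hV : V ∈ gammaSubspaces hkn) (hne : V ≠ stdCk n k hkn) :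
    ∃ (i : Fin k) (m : Fin n ⊕ Fin n) (c : Fin k → ℂ) (z : CSp n), m ∈ pivotCoords hkn i ∧
      IsNormalized hkn i m z ∧ Submodule.span ℂ (Set.range (adaptedFrame hkn i c z)) = V := by
  obtain ⟨hrank, hiso, hinf⟩ := hV
  have : Nonempty (Fin k) := ⟨⟨0, hk⟩⟩
  have hcodim : finrank ℂ (stdCk n k hkn) ≤ finrank ℂ ↥(stdCk n k hkn ⊓ V) + 1 := by
    rw [finrank_stdCk]
    omega
  obtain ⟨i, c, hc⟩ := exists_add_smul_mem_of_finrank_le (posVec hkn) V hcodim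
  have hVk : ¬ V ≤ stdCk n k hkn := fun hle =>
    hne (Submodule.eq_of_le_of_finrank_eq hle (by rw [hrank, finrank_stdCk]))
  obtain ⟨m, hm, z, hz, hzV⟩ :=
    exists_isNormalized_transversalVec_mem hiso hVk fun j _ => hc j
  refine ⟨i, m, c, z, hm, hz, Submodule.eq_of_le_of_finrank_eq ?_ ?_⟩
  · refine Submodule.span_le.2 ?_
    rintro _ ⟨j, rfl⟩
    by_cases hj : j = i
    · rwa [hj, adaptedFrame_self]
    · rw [adaptedFrame_of_ne c z hj]
      exact hc j
  · rw [hrank]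
    exact (span_adaptedFrame_mem_gammaSubspaces hm c hz).1

end AdaptedFrames

section Charts

variable {n} {k : ℕ} (hkn : k ≤ n) (i : Fin k) (m : Fin n ⊕ Fin n)

/-- The parameters of a chart of `Γ \ {ℂ^k}`: the slopes of a hyperplane of `ℂ^k`, and the fiber
coordinates other than the pivot `m` of a vector transversal to `ℂ^k`. -/
abbrev ChartParam : Type :=
  ({j : Fin k // j ≠ i} → ℂ) × (↥((fiberCoords hkn i).erase m) → ℂ)

/-- The vector with pivot coordinate `1`, the given remaining fiber coordinates, and all other
coordinates `0`. -/
def normalizedVec (y : ↥((fiberCoords hkn i).erase m) → ℂ) : CSp n :=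
  WithLp.toLp 2 (Function.extend Subtype.val y (Pi.single m 1))

/-- The adapted frame with given chart parameters. -/
def chartFrame (x : ChartParam hkn i m) : Fin k → CSp n :=
  adaptedFrame hkn i (Function.extend Subtype.val x.1 0) (normalizedVec hkn i m x.2)

variable {hkn i m}

theorem finrank_chartParam (hm : m ∈ pivotCoords hkn i) :
    finrank ℝ (ChartParam hkn i m) = 2 * (2 * n - k) := by
  have hcard : ((fiberCoords hkn i).erase m).card = 2 * (n - (k - 1)) - 1 := by
    rw [Finset.card_erase_of_mem (Finset.mem_of_mem_erase hm), card_fiberCoords]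
  have hk := i.pos
  simp only [finrank_prod, ne_eq, finrank_pi_fintype, Complex.finrank_real_complex,
    Finset.sum_const, Finset.card_univ, Fintype.card_subtype_compl, Fintype.card_fin,
    Fintype.card_unique, smul_eq_mul, Finset.univ_eq_attach, Finset.card_attach, hcard]
  omega

theorem normalizedVec_apply_coe (y : ↥((fiberCoords hkn i).erase m) → ℂ)
    (a : ↥((fiberCoords hkn i).erase m)) : normalizedVec hkn i m y a = y a :=
  Subtype.val_injective.extend_apply _ _ _

theorem isNormalized_normalizedVec (hm : m ∈ pivotCoords hkn i)
    (y : ↥((fiberCoords hkn i).erase m) → ℂ) :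
    IsNormalized hkn i m (normalizedVec hkn i m y) := by
  have happly : ∀ a ∉ (fiberCoords hkn i).erase m,
      normalizedVec hkn i m y a = (Pi.single m 1 : Fin n ⊕ Fin n → ℂ) a := fun a ha =>
    Function.extend_apply' _ _ _ fun ⟨b, hb⟩ => ha (hb ▸ b.2)
  constructor
  · intro a ha
    have ham : a ≠ m := fun h => ha (h ▸ Finset.mem_of_mem_erase hm)
    rw [happly a fun h => ha (Finset.mem_of_mem_erase h), Pi.single_eq_of_ne ham]
  · rw [happly m (Finset.notMem_erase _ _), Pi.single_eq_same]

theorem IsNormalized.eq_normalizedVec (hm : m ∈ pivotCoords hkn i) {z : CSp n}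
    (hz : IsNormalized hkn i m z) : z = normalizedVec hkn i m fun a => z a := by
  have hnorm := isNormalized_normalizedVec hm fun a => z a
  ext a
  by_cases ham : a = m
  · rw [ham, hz.pivot, hnorm.pivot]
  by_cases ha : a ∈ fiberCoords hkn i
  · exact (normalizedVec_apply_coe (fun a => z a) ⟨a, Finset.mem_erase.2 ⟨ham, ha⟩⟩).symm
  · rw [hz.eq_zero a ha, hnorm.eq_zero a ha]

theorem adaptedFrame_congr {c c' : Fin k → ℂ} (h : ∀ j ≠ i, c j = c' j) (z : CSp n) :
    adaptedFrame hkn i c z = adaptedFrame hkn i c' z := by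
  have htrans : transversalVec hkn i c z = transversalVec hkn i c' z := by
    rw [transversalVec, transversalVec,
      Finset.sum_congr rfl fun j hj => by rw [h j (Finset.ne_of_mem_erase hj)]]
  ext1 j
  by_cases hj : j = i
  · rw [hj, adaptedFrame_self, adaptedFrame_self, htrans]
  · rw [adaptedFrame_of_ne c z hj, adaptedFrame_of_ne c' z hj, h j hj]

theorem IsNormalized.exists_chartFrame_eq (hm : m ∈ pivotCoords hkn i) {z : CSp n}
    (hz : IsNormalized hkn i m z) (c : Fin k → ℂ) :
    ∃ x : ChartParam hkn i m, chartFrame hkn i m x = adaptedFrame hkn i c z := by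
  refine ⟨(fun j => c j, fun a => z a), ?_⟩
  rw [chartFrame, ← hz.eq_normalizedVec hm]
  exact adaptedFrame_congr (fun j hj => Subtype.val_injective.extend_apply _ _ ⟨j, hj⟩) z

theorem contDiff_chartFrame : ContDiff ℝ 1 (chartFrame hkn i m) := by
  have hccoord : ∀ l, ContDiff ℝ 1 fun x : ChartParam hkn i m =>
      (Function.extend Subtype.val x.1 0 : Fin k → ℂ) l :=
    contDiff_pi.1 ((contDiff_extend Subtype.val_injective 0).comp contDiff_fst)
  have hz : ContDiff ℝ 1 fun x : ChartParam hkn i m => normalizedVec hkn i m x.2 :=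
    (PiLp.contDiff_toLp (𝕜 := ℝ)).comp
      ((contDiff_extend Subtype.val_injective (Pi.single m 1)).comp contDiff_snd)
  have hzcoord : ∀ a, ContDiff ℝ 1 fun x : ChartParam hkn i m => normalizedVec hkn i m x.2 a :=
    contDiff_pi.1 ((PiLp.contDiff_ofLp (𝕜 := ℝ)).comp hz)
  refine contDiff_pi.2 fun j => ?_
  by_cases hj : j = i
  · simp only [chartFrame, hj, adaptedFrame_self, transversalVec]
    exact hz.sub ((hzcoord _).smul (ContDiff.sum fun l _ => (hccoord l).smul contDiff_const))
  · simp only [chartFrame, adaptedFrame_of_ne _ _ hj]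
    exact contDiff_const.add ((hccoord j).smul contDiff_const)

variable (hkn i m) in
/-- The chart parameters of an adapted frame. -/
def frameParam (f : Fin k → CSp n) : ChartParam hkn i m :=
  (fun j => f j (Sum.inl (Fin.castLE hkn i)), fun a => f i a)

theorem contDiff_frameParam : ContDiff ℝ 1 (frameParam hkn i m) := by
  unfold frameParam
  fun_prop

theorem leftInverse_frameParam_chartFrame :
    Function.LeftInverse (frameParam hkn i m) (chartFrame hkn i m) := by
  rintro ⟨c, y⟩
  refine Prod.ext (funext fun j => ?_) (funext fun a => ?_)
  · simp [frameParam, chartFrame, adaptedFrame_of_ne _ _ j.2, j.2.symm]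
  · simp only [frameParam, chartFrame, adaptedFrame_self,
      transversalVec_apply_of_mem _ _ (Finset.mem_of_mem_erase a.2), normalizedVec_apply_coe]

variable (hkn i m) in
/-- The part of `Γ` covered by a chart. -/
def chartDomain : Set (Submodule ℂ (CSp n)) :=
  Set.range fun x => Submodule.span ℂ (Set.range (chartFrame hkn i m x))

theorem dimH_image_chartDomain (hm : m ∈ pivotCoords hkn i) :
    dimH ((fun V : Submodule ℂ (CSp n) => V.starProjection) '' chartDomain hkn i m) =
      (2 * (2 * n - k) : ℕ) := by
  have hcoord : ∀ f ∈ Set.range (chartFrame hkn i m), ∀ j,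
      frameCoord hkn i m (f j) = Pi.single j 1 := by
    rintro _ ⟨x, rfl⟩
    exact frameCoord_adaptedFrame hm _ (isNormalized_normalizedVec hm x.2)
  rw [← finrank_chartParam hm, ← dimH_range_eq_finrank_of_leftInverse contDiff_chartFrame
    contDiff_frameParam leftInverse_frameParam_chartFrame, ← dimH_image_starProjection_span hcoord,
    chartDomain, ← Set.range_comp, ← Set.range_comp]
  rfl

theorem gammaSubspaces_eq_insert_iUnion_chartDomain (hk : 0 < k) :
    gammaSubspaces hkn = insert (stdCk n k hkn)
      (⋃ p : Σ i : Fin k, ↥(pivotCoords hkn i), chartDomain hkn p.1 p.2) := by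
  refine Set.Subset.antisymm (fun V hV => ?_) (Set.insert_subset ?_ (Set.iUnion_subset ?_))
  · refine or_iff_not_imp_left.2 fun hne => ?_
    obtain ⟨i, m, c, z, hm, hz, rfl⟩ := exists_span_adaptedFrame_eq hk hV hne
    obtain ⟨x, hx⟩ := hz.exists_chartFrame_eq hm c
    exact Set.mem_iUnion.2 ⟨⟨i, m, hm⟩, x, by simp only [hx]⟩
  · refine ⟨finrank_stdCk hkn, isOmegaIsotropic_stdCk hkn, ?_⟩
    rw [inf_idem, finrank_stdCk]
    exact Nat.sub_le _ _
  · rintro ⟨i, m, hm⟩ _ ⟨x, rfl⟩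
    exact span_adaptedFrame_mem_gammaSubspaces hm _ (isNormalized_normalizedVec hm x.2)

end Charts

theorem stmt9 (k : ℕ) (hk : 0 < k) (hkn : k ≤ n) :
    dimH (GammaIG n k hkn) = (2 * (2 * n - k) : ℕ) := by
  let i : Fin k := ⟨0, hk⟩
  have : Nonempty (Σ i : Fin k, ↥(pivotCoords hkn i)) := ⟨⟨i, _, inr_mem_pivotCoords hkn i⟩⟩
  rw [GammaIG_eq_image_gammaSubspaces, gammaSubspaces_eq_insert_iUnion_chartDomain hk,
    Set.image_insert_eq, Set.image_iUnion, Set.insert_eq, dimH_union, dimH_singleton, dimH_iUnion]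
  simp only [dimH_image_chartDomain (Subtype.prop _), ciSup_const, zero_le, sup_of_le_right]

end
end

section
/- Let W be a Coxeter group with simple reflections S, let S_P ⊆ S_Q ⊆ S, and let w ∈ W^P with decomposition w = w^Q · w_Q^P (w^Q ∈ W^Q, w_Q^P ∈ W_Q^P). Then the maximal element (in Bruhat order) of the set {v ∈ W^P : v^Q = w^Q} is w^Q · w_q^p, where w_q^p is the longest element of W_Q^P, assuming W_Q is finite. -/
/-!
STATEMENT 14: Let W be a Coxeter group, S_P ⊆ S_Q (indexed by J ⊆ K), with W_Q
finite, and let w ∈ W^P with factorization w = w^Q · w_Q^P.  Then the maximal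
element, in Bruhat order, of {v ∈ W^P : v^Q = w^Q} is w^Q · w_q^p, where w_q^p is
the longest element of W_Q^P.
-/

open CoxeterSystem

variable {B W : Type*} [Group W] {M : CoxeterMatrix B}

/-- The Bruhat order on a Coxeter group: the reflexive-transitive closure of
`a → a·t` where `t` is a reflection and the length increases. -/
def bruhatLE (cs : CoxeterSystem M W) : W → W → Prop :=
  Relation.ReflTransGen fun a b =>
    ∃ t : W, cs.IsReflection t ∧ b = a * t ∧ cs.length a < cs.length b

/-!
For a word `ω` and a reflection `t`, the parity of the number of occurrences of `t` in the right
inversion sequence of `ω` depends only on `w = π ω`, because `w` acts on `W × ZMod 2` through it;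
and `t` is a right inversion of `w` exactly when the parity is odd. Consequently `t` is a right
inversion of `a * b` if and only if exactly one of the following holds: `t` is a right inversion
of `b`, or `b * t * b⁻¹` is a right inversion of `a`.

Let `m` be a longest element of `W_Q^P`. If a reflection `t ∈ W_Q` is not an inversion of `m`,
write `m * t = c * u` with `c ∈ W_Q^P` and `u ∈ W_P`. Were `u * t * u⁻¹` an inversion of `c`, then
`m * u⁻¹ = c * (u * t * u⁻¹)` would be shorter than `c`, hence than `m`, which contradicts
`m ∈ W^P`. So `t` is an inversion of `u` and lies in `W_P`. On the other hand no inversion of an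
element `v ∈ W_Q^P` lies in `W_P`. So every inversion of `v` is one of `m`, i.e. `v` lies below `m`
in the left weak order. Left multiplication by `w^Q ∈ W^Q` adds lengths on `W_Q`, so it turns the
chain of simple reflections from `v` to `m` into a Bruhat chain.
-/

section AlternatingWord

theorem reverse_alternatingWord_two_mul (i j : B) (p : ℕ) :
    (alternatingWord i j (2 * p)).reverse = alternatingWord j i (2 * p) := by
  refine List.ext_getElem (by simp) fun k _ hk ↦ ?_
  rw [length_alternatingWord] at hk
  rw [List.getElem_reverse, getElem_alternatingWord _ _ _ _ hk,
    getElem_alternatingWord _ _ _ _ (by simp only [length_alternatingWord]; omega)]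
  simp only [length_alternatingWord]
  grind

theorem prod_map_alternatingWord_two_mul {G : Type*} [Monoid G] (f : B → G) (i j : B) (p : ℕ) :
    ((alternatingWord i j (2 * p)).map f).prod = (f i * f j) ^ p := by
  induction p with
  | zero => simp [alternatingWord]
  | succ p ih => simp [mul_add, alternatingWord_succ, ih, pow_succ]

end AlternatingWord

section InversionParity

variable (cs : CoxeterSystem M W)

local notation "s" => cs.simple
local notation "π" => cs.wordProd
local notation "ris" => cs.rightInvSeq
local notation "lis" => cs.leftInvSeq

theorem drop_leftInvSeq_alternatingWord (i j : B) :
    (lis (alternatingWord i j (2 * M i j))).drop (M i j) =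
      (lis (alternatingWord i j (2 * M i j))).take (M i j) := by
  refine List.ext_getElem (by simp; omega) fun k hk _ ↦ ?_
  simp only [List.length_drop, length_leftInvSeq, length_alternatingWord] at hk
  rw [List.getElem_drop, List.getElem_take,
    cs.getElem_leftInvSeq_alternatingWord i j _ _ (by omega),
    cs.getElem_leftInvSeq_alternatingWord i j _ _ (by omega),
    cs.prod_alternatingWord_eq_mul_pow, cs.prod_alternatingWord_eq_mul_pow,
    show (2 * (M i j + k) + 1) / 2 = M i j + k by omega,
    show (2 * k + 1) / 2 = k by omega, pow_add, cs.simple_mul_simple_pow', one_mul]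
  simp

open Classical in
theorem even_count_rightInvSeq_alternatingWord (i j : B) (t : W) :
    Even ((ris (alternatingWord i j (2 * M i j))).count t) := by
  rw [← reverse_alternatingWord_two_mul, cs.rightInvSeq_reverse, List.count_reverse,
    M.symmetric i j, ← List.take_append_drop (M j i) (lis _), List.count_append,
    drop_leftInvSeq_alternatingWord]
  exact Even.add_self _

open Classical in
/-- The action of the simple reflection `s i` on `W × ZMod 2`: it conjugates the first component
and flips the second one at `s i`. Restricted to pairs of a reflection and a sign, this is the
action of `s i` on the roots. -/
noncomputable def signedConj (i : B) : Function.End (W × ZMod 2) :=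
  fun p ↦ (s i * p.1 * s i, p.2 + if p.1 = s i then 1 else 0)

open Classical in
theorem signedConj_smul (i : B) (t : W) (e : ZMod 2) :
    signedConj cs i • (t, e) = (s i * t * s i, e + if t = s i then 1 else 0) := rfl

open Classical in
theorem prod_map_signedConj_smul (ω : List B) (t : W) (e : ZMod 2) :
    (ω.map (signedConj cs)).prod • (t, e) = (π ω * t * (π ω)⁻¹, e + (ris ω).count t) := by
  induction ω with
  | nil => simp
  | cons i ω ih =>
    have conj_eq_iff : π ω * t * (π ω)⁻¹ = s i ↔ (π ω)⁻¹ * s i * π ω = t := by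
      rw [mul_inv_eq_iff_eq_mul, mul_assoc, inv_mul_eq_iff_eq_mul, eq_comm]
    rw [List.map_cons, List.prod_cons, mul_smul, ih, signedConj_smul]
    simp only [rightInvSeq, List.count_cons, conj_eq_iff, beq_iff_eq]
    simp [wordProd_cons, mul_assoc, add_assoc]

theorem isLiftable_signedConj : M.IsLiftable (signedConj cs) := by
  classical
  intro i j
  have wordProd_eq_one : π (alternatingWord i j (2 * M i j)) = 1 := by
    simp [cs.prod_alternatingWord_eq_mul_pow]
  rw [← prod_map_alternatingWord_two_mul]
  refine eq_of_smul_eq_smul fun (⟨t, e⟩ : W × ZMod 2) ↦ ?_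
  rw [prod_map_signedConj_smul, wordProd_eq_one,
    (ZMod.natCast_eq_zero_iff_even).2 (even_count_rightInvSeq_alternatingWord cs i j t)]
  simp

/-- The action of `W` on `W × ZMod 2` extending `signedConj`. -/
noncomputable def signedConjHom : W →* Function.End (W × ZMod 2) :=
  cs.lift ⟨signedConj cs, isLiftable_signedConj cs⟩

/-- The parity of the number of occurrences of `t` in the right inversion sequence of any word
representing `w`. -/
noncomputable def inversionParity (w t : W) : ZMod 2 := (signedConjHom cs w • (t, (0 : ZMod 2))).2

open Classical in
theorem signedConjHom_wordProd_smul (ω : List B) (t : W) (e : ZMod 2) :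
    signedConjHom cs (π ω) • (t, e) = (π ω * t * (π ω)⁻¹, e + (ris ω).count t) := by
  rw [← prod_map_signedConj_smul, wordProd, map_list_prod, List.map_map]
  congr 3 with i
  exact cs.lift_apply_simple (isLiftable_signedConj cs) i

open Classical in
theorem inversionParity_wordProd (ω : List B) (t : W) :
    inversionParity cs (π ω) t = (ris ω).count t := by
  rw [inversionParity, signedConjHom_wordProd_smul, zero_add]

theorem signedConjHom_smul (w t : W) (e : ZMod 2) :
    signedConjHom cs w • (t, e) = (w * t * w⁻¹, e + inversionParity cs w t) := by
  obtain ⟨ω, rfl⟩ := cs.wordProd_surjective w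
  rw [signedConjHom_wordProd_smul, inversionParity_wordProd]

theorem inversionParity_mul (a b t : W) :
    inversionParity cs (a * b) t =
      inversionParity cs b t + inversionParity cs a (b * t * b⁻¹) := by
  rw [inversionParity, map_mul, mul_smul, signedConjHom_smul, signedConjHom_smul, zero_add]

theorem inversionParity_one (t : W) : inversionParity cs 1 t = 0 := by
  simp [inversionParity]

theorem inversionParity_simple_self (i : B) : inversionParity cs (s i) (s i) = 1 := by
  classical
  simpa using inversionParity_wordProd cs [i] (s i)

theorem inversionParity_self {t : W} (ht : cs.IsReflection t) : inversionParity cs t t = 1 := by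
  obtain ⟨u, i, rfl⟩ := ht
  have parity_inv : inversionParity cs u (s i) + inversionParity cs u⁻¹ (u * s i * u⁻¹) = 0 := by
    rw [add_comm, add_comm, ← inversionParity_mul, inv_mul_cancel, inversionParity_one]
  rw [inversionParity_mul, inversionParity_mul]
  simp only [inv_inv, mul_assoc, inv_mul_cancel, mul_one, inv_mul_cancel_left,
    mul_inv_cancel, inversionParity_simple_self] at parity_inv ⊢
  linear_combination parity_inv

theorem mem_rightInvSeq_of_inversionParity_ne_zero {ω : List B} {t : W}
    (h : inversionParity cs (π ω) t ≠ 0) : t ∈ ris ω := by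
  classical
  contrapose! h
  rw [inversionParity_wordProd, List.count_eq_zero_of_not_mem h, Nat.cast_zero]

theorem isRightInversion_of_inversionParity_ne_zero {w t : W} (h : inversionParity cs w t ≠ 0) :
    cs.IsRightInversion w t := by
  obtain ⟨ω, hω, rfl⟩ := cs.exists_isReduced w
  exact cs.isRightInversion_of_mem_rightInvSeq hω
    (mem_rightInvSeq_of_inversionParity_ne_zero cs h)

theorem isRightInversion_iff_inversionParity_ne_zero {w t : W} :
    cs.IsRightInversion w t ↔ inversionParity cs w t ≠ 0 := by
  refine ⟨fun h parity_eq ↦ ?_, isRightInversion_of_inversionParity_ne_zero cs⟩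
  have parity_mul : inversionParity cs (w * t) t ≠ 0 := by
    simp [inversionParity_mul, inversionParity_self cs h.1, parity_eq]
  exact h.1.isRightInversion_mul_left_iff.1
    (isRightInversion_of_inversionParity_ne_zero cs parity_mul) h

theorem mem_rightInvSeq_of_isRightInversion {ω : List B} {t : W}
    (h : cs.IsRightInversion (π ω) t) : t ∈ ris ω :=
  mem_rightInvSeq_of_inversionParity_ne_zero cs
    ((isRightInversion_iff_inversionParity_ne_zero cs).1 h)

theorem isRightInversion_mul_iff {a b t : W} :
    cs.IsRightInversion (a * b) t ↔
      (cs.IsRightInversion b t ↔ ¬ cs.IsRightInversion a (b * t * b⁻¹)) := by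
  simp only [isRightInversion_iff_inversionParity_ne_zero, inversionParity_mul]
  generalize inversionParity cs b t = x
  generalize inversionParity cs a (b * t * b⁻¹) = y
  revert x y
  decide

end InversionParity

section StandardParabolic

variable (cs : CoxeterSystem M W)

local notation "s" => cs.simple
local notation "π" => cs.wordProd
local notation "ℓ" => cs.length

/-- The standard parabolic subgroup `W_K` generated by the simple reflections indexed by `K`. -/
def standardParabolic (K : Set B) : Subgroup W := Subgroup.closure (cs.simple '' K)

/-- The elements of `W^K`, the minimal-length representatives of the cosets `w W_K`, encoded by the
absence of right descents in `K`. -/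
def IsMinCosetRep (K : Set B) (w : W) : Prop := ∀ i ∈ K, ℓ w < ℓ (w * s i)

variable {cs} {J K : Set B}

theorem simple_mem_standardParabolic {i : B} (hi : i ∈ K) : s i ∈ standardParabolic cs K :=
  Subgroup.subset_closure ⟨i, hi, rfl⟩

theorem wordProd_mem_standardParabolic {ω : List B} (hω : ∀ i ∈ ω, i ∈ K) :
    π ω ∈ standardParabolic cs K :=
  list_prod_mem (by simpa using fun i hi ↦ simple_mem_standardParabolic (hω i hi))

theorem standardParabolic_mono (hJK : J ⊆ K) : standardParabolic cs J ≤ standardParabolic cs K :=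
  Subgroup.closure_mono (Set.image_mono hJK)

theorem standardParabolic_induction_right {p : W → Prop} (one : p 1)
    (mul_simple : ∀ x ∈ standardParabolic cs K, ∀ i ∈ K, p x → p (x * s i)) {x : W}
    (hx : x ∈ standardParabolic cs K) : p x := by
  induction hx using Subgroup.closure_induction_right with
  | one => exact one
  | mul_right x hx _ hy ih =>
    obtain ⟨i, hi, rfl⟩ := hy
    exact mul_simple x hx i hi ih
  | mul_inv_cancel x hx _ hy ih =>
    obtain ⟨i, hi, rfl⟩ := hy
    rw [cs.inv_simple]
    exact mul_simple x hx i hi ih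

theorem mem_standardParabolic_of_isRightInversion {x t : W} (hx : x ∈ standardParabolic cs K)
    (ht : cs.IsRightInversion x t) : t ∈ standardParabolic cs K := by
  revert t
  refine standardParabolic_induction_right
    (p := fun x ↦ ∀ {t}, cs.IsRightInversion x t → t ∈ standardParabolic cs K) ?_ ?_ hx
  · intro t ht
    simpa using ht.2
  · intro x _ i hi ih t ht
    have simple_mem := simple_mem_standardParabolic (cs := cs) hi
    by_cases t_inv : cs.IsRightInversion (s i) t
    · rw [← cs.wordProd_singleton] at t_inv
      have t_eq : t = s i := by simpa using mem_rightInvSeq_of_isRightInversion cs t_inv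
      exact t_eq ▸ simple_mem
    · have conj_mem := ih (not_not.1 (mt ((isRightInversion_mul_iff cs).1 ht).2 t_inv))
      rwa [Subgroup.mul_mem_cancel_right _ (inv_mem simple_mem),
        Subgroup.mul_mem_cancel_left _ simple_mem] at conj_mem

theorem exists_isReduced_of_mem_standardParabolic {x : W} (hx : x ∈ standardParabolic cs K) :
    ∃ ω : List B, cs.IsReduced ω ∧ x = π ω ∧ ∀ i ∈ ω, i ∈ K := by
  refine standardParabolic_induction_right (p := fun x ↦ ∃ ω : List B, cs.IsReduced ω ∧
    x = π ω ∧ ∀ i ∈ ω, i ∈ K) ⟨[], by simp [CoxeterSystem.IsReduced]⟩ ?_ hx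
  rintro _ - i hi ⟨ω, hω, rfl, hωK⟩
  rcases cs.length_mul_simple (π ω) i with length_eq | length_eq
  · refine ⟨ω ++ [i], ?_, by simp [wordProd_append], by grind⟩
    rw [CoxeterSystem.IsReduced, wordProd_append, wordProd_singleton, length_eq,
      hω.eq, List.length_append, List.length_singleton]
  · obtain ⟨k, hk, getElem_eq⟩ := List.mem_iff_getElem.1
      (mem_rightInvSeq_of_isRightInversion cs (ω := ω)
        ⟨cs.isReflection_simple i, by omega⟩)
    have eraseIdx_eq := cs.wordProd_mul_getD_rightInvSeq ω k
    rw [List.getD_eq_getElem _ _ hk, getElem_eq] at eraseIdx_eq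
    refine ⟨ω.eraseIdx k, ?_, eraseIdx_eq, fun j hj ↦ hωK j (List.mem_of_mem_eraseIdx hj)⟩
    rw [cs.length_rightInvSeq] at hk
    have := hω.eq
    rw [CoxeterSystem.IsReduced, ← eraseIdx_eq, List.length_eraseIdx_of_lt hk]
    omega

theorem IsMinCosetRep.eq_one_of_mem {x : W} (hx : IsMinCosetRep cs K x)
    (hxK : x ∈ standardParabolic cs K) : x = 1 := by
  obtain ⟨ω, hω, rfl, hωK⟩ := exists_isReduced_of_mem_standardParabolic hxK
  obtain rfl | ⟨ω, i, rfl⟩ := List.eq_nil_or_concat' ω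
  · exact cs.wordProd_nil
  · have length_lt := hx i (hωK i (by simp))
    have length_le := cs.length_wordProd_le ω
    rw [hω.eq, wordProd_append, wordProd_singleton, cs.simple_mul_simple_cancel_right,
      List.length_append, List.length_singleton] at length_lt
    omega

theorem length_mul_of_forall_length_le {a b : W}
    (ha : ∀ x ∈ standardParabolic cs K, ℓ a ≤ ℓ (a * x)) (hb : b ∈ standardParabolic cs K) :
    ℓ (a * b) = ℓ a + ℓ b := by
  refine standardParabolic_induction_right (p := fun b ↦ ℓ (a * b) = ℓ a + ℓ b) (by simp) ?_ hb
  intro x hx i hi ih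
  have length_le := cs.length_mul_le a (x * s i)
  have not_inversion : ¬ cs.IsRightInversion a (x * s i * x⁻¹) := fun h ↦ h.2.not_ge
    (ha _ (mul_mem (mul_mem hx (simple_mem_standardParabolic hi)) (inv_mem hx)))
  have descent_iff : cs.IsRightDescent (a * x) i ↔ cs.IsRightDescent x i := by
    simp only [← cs.isRightInversion_simple_iff_isRightDescent, isRightInversion_mul_iff,
      not_inversion, not_false_iff, iff_true]
  rw [← mul_assoc] at length_le ⊢
  unfold IsRightDescent at descent_iff
  rcases cs.length_mul_simple x i with h | h <;>
    rcases cs.length_mul_simple (a * x) i with h' | h' <;> omega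

variable (cs K) in
theorem exists_forall_length_le_mul (x : W) :
    ∃ u ∈ standardParabolic cs K, ∀ y ∈ standardParabolic cs K, ℓ (x * u) ≤ ℓ (x * u * y) := by
  obtain ⟨u, hu, u_min⟩ := WellFounded.has_min (measure fun u : W ↦ ℓ (x * u)).wf
    (standardParabolic cs K : Set W) ⟨1, one_mem _⟩
  refine ⟨u, hu, fun y hy ↦ ?_⟩
  rw [mul_assoc]
  exact not_lt.1 (u_min (u * y) (mul_mem hu hy))

theorem isMinCosetRep_of_forall_length_le {a : W}
    (ha : ∀ x ∈ standardParabolic cs K, ℓ a ≤ ℓ (a * x)) : IsMinCosetRep cs K a := fun i hi ↦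
  (ha _ (simple_mem_standardParabolic hi)).lt_of_ne (cs.length_mul_simple_ne a i).symm

theorem IsMinCosetRep.length_mul {a b : W} (ha : IsMinCosetRep cs K a)
    (hb : b ∈ standardParabolic cs K) : ℓ (a * b) = ℓ a + ℓ b := by
  obtain ⟨u, hu, u_min⟩ := exists_forall_length_le_mul cs K a
  have u_inv_minimal : IsMinCosetRep cs K u⁻¹ := fun i hi ↦ by
    have length_a := length_mul_of_forall_length_le u_min (inv_mem hu)
    have length_a_simple := length_mul_of_forall_length_le u_min
      (mul_mem (inv_mem hu) (simple_mem_standardParabolic hi))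
    rw [mul_inv_cancel_right] at length_a
    rw [← mul_assoc, mul_inv_cancel_right] at length_a_simple
    have := ha i hi
    omega
  have u_eq : u = 1 := inv_eq_one.1 (u_inv_minimal.eq_one_of_mem (inv_mem hu))
  rw [u_eq, mul_one] at u_min
  exact length_mul_of_forall_length_le u_min hb

theorem IsMinCosetRep.mul {a b : W} (hJK : J ⊆ K) (ha : IsMinCosetRep cs K a)
    (hb : IsMinCosetRep cs J b) (hbK : b ∈ standardParabolic cs K) :
    IsMinCosetRep cs J (a * b) := fun i hi ↦ by
  rw [mul_assoc, ha.length_mul hbK,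
    ha.length_mul (mul_mem hbK (simple_mem_standardParabolic (hJK hi)))]
  exact Nat.add_lt_add_left (hb i hi) _

theorem IsMinCosetRep.notMem_of_isRightInversion {v t : W} (hv : IsMinCosetRep cs J v)
    (ht : cs.IsRightInversion v t) : t ∉ standardParabolic cs J := fun htJ ↦ by
  have length_mul := hv.length_mul htJ
  have := ht.2
  omega

theorem isRightInversion_of_longest_minCosetRep (hJK : J ⊆ K) {m t : W} (hm : IsMinCosetRep cs J m)
    (hmK : m ∈ standardParabolic cs K)
    (m_longest : ∀ v ∈ standardParabolic cs K, IsMinCosetRep cs J v → ℓ v ≤ ℓ m)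
    (ht : cs.IsReflection t) (htK : t ∈ standardParabolic cs K)
    (htJ : t ∉ standardParabolic cs J) : cs.IsRightInversion m t := by
  by_contra not_inversion
  obtain ⟨d, hd, d_min⟩ := exists_forall_length_le_mul cs J (m * t)
  have length_le : ℓ (m * t * d) ≤ ℓ m :=
    m_longest _ (mul_mem (mul_mem hmK htK) (standardParabolic_mono hJK hd))
      (isMinCosetRep_of_forall_length_le d_min)
  have inversion_mul : cs.IsRightInversion (m * t * d * d⁻¹) t := by
    rwa [mul_inv_cancel_right, ht.isRightInversion_mul_left_iff]
  have not_inversion_d : ¬ cs.IsRightInversion d⁻¹ t := fun h ↦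
    htJ (mem_standardParabolic_of_isRightInversion (inv_mem hd) h)
  have inversion_rep : cs.IsRightInversion (m * t * d) (d⁻¹ * t * d⁻¹⁻¹) :=
    not_not.1 (mt ((isRightInversion_mul_iff cs).1 inversion_mul).2 not_inversion_d)
  have rep_mul_eq : m * t * d * (d⁻¹ * t * d⁻¹⁻¹) = m * d := by
    rw [inv_inv, mul_assoc d⁻¹, mul_assoc (m * t), mul_inv_cancel_left, mul_assoc m,
      ← mul_assoc t, ht.mul_self, one_mul]
  have length_lt := inversion_rep.2
  rw [rep_mul_eq, hm.length_mul hd] at length_lt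
  omega

end StandardParabolic

section WeakOrder

variable {cs : CoxeterSystem M W} {K : Set B}

local notation "s" => cs.simple
local notation "π" => cs.wordProd
local notation "ℓ" => cs.length

theorem length_mul_inv_add_length_of_inversions_subset {v m : W}
    (h : ∀ t, cs.IsRightInversion v t → cs.IsRightInversion m t) :
    ℓ (m * v⁻¹) + ℓ v = ℓ m := by
  obtain ⟨ω, hω, rfl⟩ := cs.exists_isReduced v
  induction ω with
  | nil => simp
  | cons i ω ih =>
    have hω' : cs.IsReduced ω := hω.drop 1
    have length_m : ℓ (m * (π ω)⁻¹) + ℓ (π ω) = ℓ m := ih hω' fun t ht ↦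
      h t (cs.isRightInversion_of_mem_rightInvSeq hω
        (List.mem_cons_of_mem _ (mem_rightInvSeq_of_isRightInversion cs ht)))
    have length_cons : ℓ (π (i :: ω)) = ℓ (π ω) + 1 := by
      rw [hω.eq, hω'.eq, List.length_cons]
    have inversion_m : cs.IsRightInversion (m * (π ω)⁻¹ * π ω) ((π ω)⁻¹ * s i * π ω) := by
      rw [inv_mul_cancel_right]
      exact h _ (cs.isRightInversion_of_mem_rightInvSeq hω List.mem_cons_self)
    have not_inversion : ¬ cs.IsRightInversion (π ω) ((π ω)⁻¹ * s i * π ω) := fun ht ↦ by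
      have length_lt := ht.2
      rw [mul_assoc, mul_inv_cancel_left, ← wordProd_cons] at length_lt
      omega
    have inversion_quot : cs.IsRightInversion (m * (π ω)⁻¹) (s i) := by
      have := not_not.1 (mt ((isRightInversion_mul_iff cs).1 inversion_m).2 not_inversion)
      rwa [mul_assoc (π ω)⁻¹, mul_inv_cancel_left, mul_inv_cancel_right] at this
    have descent := cs.isRightDescent_iff.1
      ((cs.isRightInversion_simple_iff_isRightDescent _ i).1 inversion_quot)
    rw [length_cons, wordProd_cons, mul_inv_rev, cs.inv_simple, ← mul_assoc]
    omega

theorem bruhatLE_mul_left_of_length_mul {a x v : W} (ha : IsMinCosetRep cs K a)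
    (hx : x ∈ standardParabolic cs K) (hv : v ∈ standardParabolic cs K)
    (hxv : ℓ (x * v) = ℓ x + ℓ v) : bruhatLE cs (a * v) (a * (x * v)) := by
  obtain ⟨ω, hω, rfl, hωK⟩ := exists_isReduced_of_mem_standardParabolic hx
  rw [hω.eq] at hxv
  clear hx hω
  induction ω with
  | nil =>
    rw [wordProd_nil, one_mul]
    exact Relation.ReflTransGen.refl
  | cons i ω ih =>
    have hiK : s i ∈ standardParabolic cs K := simple_mem_standardParabolic (hωK i (by simp))
    have hωK' : ∀ j ∈ ω, j ∈ K := fun j hj ↦ hωK j (List.mem_cons_of_mem i hj)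
    have hωvK : π ω * v ∈ standardParabolic cs K :=
      mul_mem (wordProd_mem_standardParabolic hωK') hv
    rw [wordProd_cons, mul_assoc, List.length_cons] at hxv
    have length_le : ℓ (π ω * v) ≤ ω.length + ℓ v :=
      (cs.length_mul_le _ _).trans (Nat.add_le_add_right (cs.length_wordProd_le ω) _)
    have length_step := cs.length_simple_mul (π ω * v) i
    refine (ih hωK' (by omega)).tail ⟨(π ω * v)⁻¹ * s i * (π ω * v), ?_, ?_, ?_⟩
    · simpa only [inv_inv] using (cs.isReflection_simple i).conj (π ω * v)⁻¹
    · simp only [wordProd_cons, mul_assoc, mul_inv_cancel_left, mul_inv_rev]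
    · rw [wordProd_cons, mul_assoc (s i), ha.length_mul hωvK,
        ha.length_mul (mul_mem hiK hωvK)]
      omega

end WeakOrder

theorem stmt14_general (cs : CoxeterSystem M W) (J K : Set B) (hJK : J ⊆ K)
    (wQ : W) (hwQ : IsMinCosetRep cs K wQ)
    (wqp : W) (hwqp_mem : wqp ∈ standardParabolic cs K) (hwqp_min : IsMinCosetRep cs J wqp)
    (hwqp_long : ∀ v ∈ standardParabolic cs K, IsMinCosetRep cs J v →
      cs.length v ≤ cs.length wqp) :
    letI Z : Set W := {v | IsMinCosetRep cs J v ∧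
      ∃ b : W, b ∈ standardParabolic cs K ∧ IsMinCosetRep cs J b ∧
        v = wQ * b ∧ cs.length v = cs.length wQ + cs.length b}
    wQ * wqp ∈ Z ∧ ∀ v ∈ Z, bruhatLE cs v (wQ * wqp) := by
  refine ⟨⟨hwQ.mul hJK hwqp_min hwqp_mem, wqp, hwqp_mem, hwqp_min, rfl,
    hwQ.length_mul hwqp_mem⟩, ?_⟩
  rintro _ ⟨-, b, b_mem, b_min, rfl, -⟩
  have inversions_subset : ∀ t, cs.IsRightInversion b t → cs.IsRightInversion wqp t :=
    fun t ht ↦ isRightInversion_of_longest_minCosetRep hJK hwqp_min hwqp_mem hwqp_long ht.1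
      (mem_standardParabolic_of_isRightInversion b_mem ht) (b_min.notMem_of_isRightInversion ht)
  have length_eq := length_mul_inv_add_length_of_inversions_subset inversions_subset
  have bruhat_le := bruhatLE_mul_left_of_length_mul hwQ (mul_mem hwqp_mem (inv_mem b_mem)) b_mem
    (by rw [inv_mul_cancel_right, length_eq])
  rwa [inv_mul_cancel_right] at bruhat_le

theorem stmt14 (cs : CoxeterSystem M W) (J K : Set B) (hJK : J ⊆ K)
    (hfin : ((Subgroup.closure (cs.simple '' K) : Subgroup W) : Set W).Finite)
    (w wQ wQP : W)
    (hw : ∀ i ∈ J, cs.length w < cs.length (w * cs.simple i))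
    (hwQ : ∀ i ∈ K, cs.length wQ < cs.length (wQ * cs.simple i))
    (hwQP_mem : wQP ∈ Subgroup.closure (cs.simple '' K))
    (hwQP_min : ∀ i ∈ J, cs.length wQP < cs.length (wQP * cs.simple i))
    (hfact : w = wQ * wQP)
    (hlen : cs.length w = cs.length wQ + cs.length wQP)
    (wqp : W) (hwqp_mem : wqp ∈ Subgroup.closure (cs.simple '' K))
    (hwqp_min : ∀ i ∈ J, cs.length wqp < cs.length (wqp * cs.simple i))
    (hwqp_long : ∀ v ∈ Subgroup.closure (cs.simple '' K),
      (∀ i ∈ J, cs.length v < cs.length (v * cs.simple i)) →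
        cs.length v ≤ cs.length wqp) :
    -- the set {v ∈ W^P : v^Q = w^Q}:
    letI Z : Set W := {v | (∀ i ∈ J, cs.length v < cs.length (v * cs.simple i)) ∧
      ∃ b : W, b ∈ Subgroup.closure (cs.simple '' K) ∧
        (∀ i ∈ J, cs.length b < cs.length (b * cs.simple i)) ∧
        v = wQ * b ∧ cs.length v = cs.length wQ + cs.length b}
    wQ * wqp ∈ Z ∧ ∀ v ∈ Z, bruhatLE cs v (wQ * wqp) := by
  exact stmt14_general cs J K hJK wQ hwQ wqp hwqp_mem hwqp_min hwqp_long
end
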